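/- Let A, B, C ≥ 0 and ε > 0 be real numbers, and let δ ≥ 0 satisfy δ · (B + C·ε + √(A·ε)) ≤ ε and C·δ < 1. Then A·δ²/(1 − C·δ) + B·δ ≤ ε. -/

import Mathlib

/-!
Put `s = √(A ε)`, `t = ε (1 - C δ)` and `b = B δ`. The hypothesis on `δ` says `δ s ≤ t - b`,
and `0 ≤ t ≤ ε`, so `ε A δ² = (δ s)² ≤ (t - b)² ≤ (ε - b) t`. Cancelling `ε` gives
`A δ² ≤ (ε - b) (1 - C δ)`, which is the claim after division by `1 - C δ > 0`.
-/

/-- Let A, B, C ≥ 0 and ε > 0 be real, and let δ ≥ 0 satisfy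
δ·(B + C·ε + √(A·ε)) ≤ ε and C·δ < 1. Then A·δ²/(1 − C·δ) + B·δ ≤ ε. -/
theorem stmt8 (A B C ε δ : ℝ) (hA : 0 ≤ A) (hB : 0 ≤ B) (hC : 0 ≤ C) (hε : 0 < ε)
    (hδ : 0 ≤ δ) (hbound : δ * (B + C * ε + Real.sqrt (A * ε)) ≤ ε)
    (hCδ : C * δ < 1) :
    A * δ ^ 2 / (1 - C * δ) + B * δ ≤ ε := by
  have hs : Real.sqrt (A * ε) ^ 2 = A * ε := Real.sq_sqrt (by positivity)
  have hs0 : 0 ≤ Real.sqrt (A * ε) := Real.sqrt_nonneg _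
  generalize Real.sqrt (A * ε) = s at *
  have hu : 0 < 1 - C * δ := by linarith
  have hb : 0 ≤ B * δ := by positivity
  have hcd : 0 ≤ ε * (C * δ) := by positivity
  have hds : 0 ≤ δ * s := by positivity
  have h1 : δ * s ≤ ε * (1 - C * δ) - B * δ := by linarith
  have h2 : (δ * s) ^ 2 ≤ (ε * (1 - C * δ) - B * δ) ^ 2 := pow_le_pow_left₀ hds h1 2
  have h3 : (ε * (1 - C * δ) - B * δ) ^ 2 ≤ (ε - B * δ) * (ε * (1 - C * δ)) := by
    have ht : 0 ≤ ε * (1 - C * δ) := by positivity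
    rw [sq]
    exact mul_le_mul (by linarith) (by linarith) (by linarith) (by linarith)
  have h4 : A * δ ^ 2 ≤ (ε - B * δ) * (1 - C * δ) := by
    refine le_of_mul_le_mul_left ?_ hε
    calc ε * (A * δ ^ 2) = (δ * s) ^ 2 := by rw [mul_pow, hs]; ring
      _ ≤ (ε - B * δ) * (ε * (1 - C * δ)) := h2.trans h3
      _ = ε * ((ε - B * δ) * (1 - C * δ)) := by ring
  have h5 := (div_le_iff₀ hu).2 h4
  linarith
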